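/- N is an elementary substructure of M if and only if N ⊆ M and there is an ultrafilter U such that the ultrapowers Π_U N and Π_U M are isomorphic via an isomorphism that is the identity on the diagonal image of N. -/

import Mathlib

open FirstOrder

universe u v w x

namespace KeislerShelah

open Cardinal Set

/-- Transfinite construction of a large set with a chain-closed property, accomplishing every task
of a given family, when each single task can be accomplished by a small enlargement. -/
theorem exists_superset_forall_task {T J : Type x} (Good : Set T → Prop) (task : J → Set T → Prop)
    (task_mono : ∀ j s t, s ⊆ t → task j s → task j t) {lam Θ : Cardinal.{x}}
    (hlam : ℵ₀ ≤ lam) (hlt : lam < Θ) (hJ : #J ≤ Θ)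
    (good_sUnion : ∀ c : Set (Set T), c.Nonempty → IsChain (· ⊆ ·) c → (∀ s ∈ c, Good s) →
      Good (⋃₀ c))
    (step : ∀ s, Good s → #s < Θ → ∀ j, ∃ t, s ⊆ t ∧ Good t ∧ task j t ∧ #t ≤ max lam #s)
    (s₀ : Set T) (h₀ : Good s₀) (hs₀ : #s₀ ≤ lam) :
    ∃ s, s₀ ⊆ s ∧ Good s ∧ ∀ j, task j s := by
  classical
  obtain ⟨r, wo, hr⟩ := Cardinal.exists_ord_eq J
  choose! nx nx_sub nx_good nx_task nx_card using step
  let next : J → Set T → Set T := fun j s => if Good s ∧ #s < Θ then nx s j else s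
  have sub_next : ∀ j s, s ⊆ next j s := by
    intro j s
    by_cases h : Good s ∧ #s < Θ
    · simpa only [next, if_pos h] using nx_sub s h.1 h.2 j
    · simp only [next, if_neg h, subset_refl]
  let F : J → Set T := (wo.wf).fix fun j ih => next j (s₀ ∪ ⋃ (k) (h : r k j), ih k h)
  let P : J → Set T := fun j => s₀ ∪ ⋃ (k) (_ : r k j), F k
  have F_eq : ∀ j, F j = next j (P j) := fun j => wo.wf.fix_eq _ j
  have P_sub : ∀ j, P j ⊆ F j := fun j => (F_eq j) ▸ sub_next j _
  have F_mono : ∀ k j, r k j → F k ⊆ F j := fun k j h =>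
    (subset_union_of_subset_right (subset_iUnion₂ (s := fun k (_ : r k j) => F k) k h) s₀).trans
      (P_sub j)
  have union_good : ∀ A : Set J, (∀ k ∈ A, Good (F k)) → Good (s₀ ∪ ⋃ k ∈ A, F k) := by
    intro A hA
    have : s₀ ∪ ⋃ k ∈ A, F k = ⋃₀ (insert s₀ (F '' A)) := by
      rw [sUnion_insert, sUnion_image]
    rw [this]
    refine good_sUnion _ (insert_nonempty _ _) ?_ ?_
    · refine IsChain.insert ?_ ?_
      · rintro _ ⟨k, hk, rfl⟩ _ ⟨l, hl, rfl⟩ -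
        rcases trichotomous_of r k l with h | h | h
        · exact Or.inl (F_mono _ _ h)
        · exact Or.inl (h ▸ subset_rfl)
        · exact Or.inr (F_mono _ _ h)
      · rintro _ ⟨k, hk, rfl⟩ -
        exact Or.inl (subset_union_left.trans (P_sub k))
    · rintro s (rfl | ⟨k, hk, rfl⟩)
      exacts [h₀, hA k hk]
  have seg_lt : ∀ j, #{k | r k j} < Θ := fun j =>
    lt_of_lt_of_le (Cardinal.card_typein_lt j hr) hJ
  have main : ∀ j, Good (F j) ∧ #(F j) ≤ max lam #{k | r k j} ∧ task j (F j) := by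
    intro j
    induction j using wo.wf.induction with
    | _ j ih =>
    have hgood : Good (P j) := union_good {k | r k j} fun k hk => (ih k hk).1
    have hinf : ℵ₀ ≤ max lam #{k | r k j} := hlam.trans (le_max_left _ _)
    have hcard : #(P j) ≤ max lam #{k | r k j} := by
      refine (mk_union_le _ _).trans (add_le_of_le hinf (hs₀.trans (le_max_left _ _)) ?_)
      refine (mk_biUnion_le F {k | r k j}).trans ?_
      refine mul_le_of_le hinf (le_max_right _ _) (ciSup_le' ?_)
      rintro ⟨k, hk⟩
      refine (ih k hk).2.1.trans (max_le_max le_rfl (mk_le_mk_of_subset ?_))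
      intro l hl
      exact _root_.trans hl hk
    have hlt' : #(P j) < Θ := hcard.trans_lt (max_lt hlt (seg_lt j))
    have hF : F j = nx (P j) j := by rw [F_eq]; exact if_pos ⟨hgood, hlt'⟩
    rw [hF]
    exact ⟨nx_good _ hgood hlt' j, (nx_card _ hgood hlt' j).trans (max_le (le_max_left _ _) hcard),
      nx_task _ hgood hlt' j⟩
  refine ⟨s₀ ∪ ⋃ k ∈ (univ : Set J), F k, subset_union_left,
    union_good univ fun k _ => (main k).1, fun j => task_mono j _ _ ?_ (main j).2.2⟩
  exact subset_union_of_subset_right (subset_biUnion_of_mem (u := F) (mem_univ j)) _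

section Consistent

variable {I Ξ K : Type x}

/-- The set of indices at which the functions `f ξ`, for `ξ ∈ s`, take the values `h ξ`. -/
def cylinder (f : Ξ → I → K) (s : Set Ξ) (h : Ξ → K) : Set I := {i | ∀ ξ ∈ s, f ξ i = h ξ}

/-- The functions `f ξ` with `ξ ∉ C` are independent modulo `D`, for conditions on at most `#K`
functions. -/
def Consistent (f : Ξ → I → K) (D : Filter I) (C : Set Ξ) : Prop :=
  ∀ X ∈ D, ∀ s : Set Ξ, #s ≤ #K → Disjoint s C → ∀ h : Ξ → K, (X ∩ cylinder f s h).Nonempty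

/-- Conditions on functions `f ξ` can be met while some further function agrees with `g`, outside a
small set of exceptions. -/
theorem Consistent.exists_small_exception [Infinite K] {f : Ξ → I → K} {D : Filter I} {C : Set Ξ}
    (hD : Consistent f D C) (g : I → K) {X : Set I} (hX : X ∈ D) :
    ∃ C' : Set Ξ, #C' ≤ #K ∧ ∀ (ξ : Ξ) (s : Set Ξ) (h : Ξ → K), #s ≤ #K → ξ ∉ s →
      Disjoint (insert ξ s) (C ∪ C') → (X ∩ cylinder f s h ∩ {i | f ξ i = g i}).Nonempty := by
  classical
  let Bad : Set (Set Ξ) := {u | ∃ (ξ : Ξ) (s : Set Ξ) (h : Ξ → K), u = insert ξ s ∧ #s ≤ #K ∧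
    ξ ∉ s ∧ Disjoint u C ∧ ¬ (X ∩ cylinder f s h ∩ {i | f ξ i = g i}).Nonempty}
  obtain ⟨P, hP⟩ := zorn_subset {P : Set (Set Ξ) | P ⊆ Bad ∧ P.PairwiseDisjoint id} (by
    intro c hc hchain
    refine ⟨⋃₀ c, ⟨sUnion_subset fun s hs => (hc hs).1, ?_⟩, fun s hs => subset_sUnion_of_mem hs⟩
    rw [pairwiseDisjoint_sUnion hchain.directedOn]
    exact fun s hs => (hc hs).2)
  have hK : ℵ₀ ≤ #K := aleph0_le_mk K
  have hPK : #P ≤ #K := by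
    by_contra hcon
    obtain ⟨e⟩ := (not_le.1 hcon).le
    have hbad : ∀ k, (e k : Set Ξ) ∈ Bad := fun k => hP.prop.1 (e k).2
    choose ξ s h hu hs hξ hdisj hempty using hbad
    have huniq : ∀ k l η, η ∈ (e k : Set Ξ) → η ∈ (e l : Set Ξ) → k = l := by
      intro k l η hk hl
      by_contra hne
      have := hP.prop.2 (e k).2 (e l).2 (fun h => hne (e.injective (Subtype.ext h)))
      exact Set.disjoint_left.1 this hk hl
    let H : Ξ → K := fun η => if hη : ∃ k, η ∈ (e k : Set Ξ) then
      (if η = ξ hη.choose then hη.choose else h hη.choose η) else Classical.arbitrary K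
    have hH : ∀ k η, η ∈ (e k : Set Ξ) → H η = if η = ξ k then k else h k η := by
      intro k η hk
      have hη : ∃ k, η ∈ (e k : Set Ξ) := ⟨k, hk⟩
      have : hη.choose = k := huniq _ _ η hη.choose_spec hk
      simp only [H, dif_pos hη, this]
    obtain ⟨i, hiX, hi⟩ := hD X hX (⋃ k, (e k : Set Ξ)) (by
      refine (mk_iUnion_le _).trans (mul_le_of_le hK le_rfl (ciSup_le' fun k => ?_))
      rw [hu k]
      exact mk_insert_le.trans (add_le_of_le hK (hs k) (one_le_aleph0.trans hK)))
      (disjoint_iUnion_left.2 hdisj) H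
    have hval : ∀ η ∈ (e (g i) : Set Ξ), f η i = H η := fun η hη => hi η (mem_iUnion.2 ⟨_, hη⟩)
    refine hempty (g i) ⟨i, ⟨hiX, fun η hη => ?_⟩, ?_⟩
    · have hmem : η ∈ (e (g i) : Set Ξ) := by rw [hu]; exact mem_insert_of_mem _ hη
      rw [hval η hmem, hH _ η hmem, if_neg]
      rintro rfl
      exact hξ _ hη
    · have hmem : ξ (g i) ∈ (e (g i) : Set Ξ) := by rw [hu]; exact mem_insert _ _
      change f (ξ (g i)) i = g i
      rw [hval _ hmem, hH _ _ hmem, if_pos rfl]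
  refine ⟨⋃₀ P, ?_, ?_⟩
  · rw [sUnion_eq_biUnion]
    refine (mk_biUnion_le _ P).trans (mul_le_of_le hK hPK (ciSup_le' ?_))
    rintro ⟨u, hu⟩
    obtain ⟨ξ, s, h, rfl, hs, -⟩ := hP.prop.1 hu
    exact mk_insert_le.trans (add_le_of_le hK hs (one_le_aleph0.trans hK))
  · intro ξ s h hs hξ hdisj
    by_contra hempty
    rw [disjoint_union_right] at hdisj
    have hmem : insert ξ s ∈ P := by
      have hins : insert (insert ξ s) P ∈ {P : Set (Set Ξ) | P ⊆ Bad ∧ P.PairwiseDisjoint id} := by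
        refine ⟨insert_subset ⟨ξ, s, h, rfl, hs, hξ, hdisj.1, hempty⟩ hP.prop.1,
          hP.prop.2.insert fun u hu _ => ?_⟩
        exact hdisj.2.mono_right (subset_sUnion_of_mem hu)
      exact hP.le_of_ge hins (subset_insert _ _) (mem_insert _ _)
    exact Set.disjoint_left.1 hdisj.2 (mem_insert ξ s) (mem_sUnion_of_mem (mem_insert ξ s) hmem)

/-- A version of `Consistent.exists_small_exception` for a family of functions `g` and all sets of
a filter. -/
theorem Consistent.exists_exception [Infinite K] {f : Ξ → I → K} {E : Set (Set I)} {C : Set Ξ}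
    (hD : Consistent f (Filter.generate E) C) {Φ : Type x} (g : Φ → I → K) {τ : Cardinal.{x}}
    (hK : #K ≤ τ) (hE : #E ≤ τ) (hΦ : #Φ ≤ τ) (hC : #C ≤ τ) :
    ∃ C' : Set Ξ, C ⊆ C' ∧ #C' ≤ τ ∧ ∀ ξ ∉ C', ∀ X ∈ Filter.generate E, ∀ (s : Set Ξ) (h : Ξ → K),
      #s ≤ #K → ξ ∉ s → Disjoint s C' →
        ∀ p, (X ∩ cylinder f s h ∩ {i | f ξ i = g p i}).Nonempty := by
  classical
  have hτ : ℵ₀ ≤ τ := (aleph0_le_mk K).trans hK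
  have hgen : ∀ t : Finset E, (⋂₀ (Subtype.val '' (t : Set E))) ∈ Filter.generate E := fun t =>
    Filter.mem_generate_iff.2 ⟨_, Subtype.coe_image_subset _ _, t.finite_toSet.image _, subset_rfl⟩
  choose Ex hEx_card hEx using fun (q : Φ × Finset E) =>
    hD.exists_small_exception (g q.1) (hgen q.2)
  have hfin : #(Finset E) ≤ τ := by
    rcases finite_or_infinite E with h | h
    · exact (mk_le_aleph0 (α := Finset E)).trans hτ
    · rwa [mk_finset_of_infinite]
  refine ⟨C ∪ ⋃ q, Ex q, subset_union_left, ?_, ?_⟩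
  · refine (mk_union_le _ _).trans (add_le_of_le hτ hC ((mk_iUnion_le _).trans
      (mul_le_of_le hτ ?_ (ciSup_le' fun q => (hEx_card q).trans hK))))
    rw [mk_prod, lift_id, lift_id]
    exact mul_le_of_le hτ hΦ hfin
  · intro ξ hξ X hX s h hs hξs hdisj p
    obtain ⟨t, htE, htfin, htX⟩ := Filter.mem_generate_iff.1 hX
    lift t to Set E using htE
    have htfin' : t.Finite := htfin.of_finite_image Subtype.val_injective.injOn
    have hsub : C ∪ Ex (p, htfin'.toFinset) ⊆ C ∪ ⋃ q, Ex q :=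
      union_subset_union_right _ (subset_iUnion _ _)
    refine (hEx (p, htfin'.toFinset) ξ s h hs hξs ?_).mono ?_
    · exact (disjoint_insert_left.2 ⟨hξ, hdisj⟩).mono_right hsub
    · refine inter_subset_inter_left _ (inter_subset_inter_left _ ?_)
      simpa using htX

/-- The function on triples `(a, t, m)` reading off `m k` when the trace of `ξ` along `a` is
`t k`. -/
noncomputable def readOff (K : Type x) [Nonempty K] (ξ : Set (Set K))
    (i : (K → Set K) × (K → Set K) × (K → K)) : K :=
  open Classical in if h : ∃ k, i.1 ⁻¹' ξ = i.2.1 k then i.2.2 h.choose else Classical.arbitrary K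

theorem consistent_readOff (K : Type x) [Infinite K] :
    Consistent (readOff K) (Filter.generate ∅) ∅ := by
  classical
  intro X hX s hs _ h
  rw [Filter.generate_empty, Filter.mem_top] at hX
  subst hX
  rw [univ_inter]
  rcases s.eq_empty_or_nonempty with rfl | hne
  · exact ⟨(fun _ => ∅, fun _ => ∅, id), fun ξ hξ => hξ.elim⟩
  have := hne.to_subtype
  obtain ⟨e⟩ := hs
  let q : K → s := Function.invFun e
  have hq : Function.Surjective q := Function.invFun_surjective e.injective
  obtain ⟨pair⟩ : Nonempty (K ≃ K × K) := Cardinal.eq.1 (by simp)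
  have hsep : ∀ p : K × K, ∃ d : Set K, (q p.1 : Set (Set K)) ≠ q p.2 →
      ¬ (d ∈ (q p.1 : Set (Set K)) ↔ d ∈ (q p.2 : Set (Set K))) := by
    intro p
    by_cases hp : (q p.1 : Set (Set K)) = q p.2
    · exact ⟨∅, fun h => (h hp).elim⟩
    · by_contra! hcon
      exact hp (Set.ext fun d => (hcon d).2)
  choose d hd using hsep
  let a : K → Set K := d ∘ pair
  have ha : ∀ k l, a ⁻¹' (q k) = a ⁻¹' (q l) → (q k : Set (Set K)) = q l := by
    intro k l hkl
    by_contra hne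
    apply hd (k, l) hne
    have := Set.ext_iff.1 hkl (pair.symm (k, l))
    simpa [a] using this
  refine ⟨(a, fun k => a ⁻¹' (q k), fun k => h (q k)), fun ξ hξ => ?_⟩
  obtain ⟨k, hk⟩ := hq ⟨ξ, hξ⟩
  have hk' : (q k : Set (Set K)) = ξ := congrArg Subtype.val hk
  have hex : ∃ l, a ⁻¹' ξ = a ⁻¹' (q l) := ⟨k, by rw [hk']⟩
  have := ha k hex.choose (by rw [hk']; exact hex.choose_spec)
  simp only [readOff]
  rw [dif_pos hex, ← this, hk']

end Consistent

section Matched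

open FirstOrder.Language

variable {L : FirstOrder.Language.{u, v}} {A B : Type w} [L.Structure A] [L.Structure B]
  {I V : Type (max u v w)} {eA : V → I → A} {eB : V → I → B} {D : Filter I} {R : Set V}

variable (L) in
/-- The families `eA r` and `eB r`, for `r ∈ R`, satisfy the same formulas at `D`-almost all
indices. -/
def Matched (eA : V → I → A) (eB : V → I → B) (D : Filter I) (R : Set V) : Prop :=
  ∀ φ : L.Formula R, ∀ᶠ i in D, φ.Realize (fun r => eA r i) ↔ φ.Realize (fun r => eB r i)

theorem Matched.symm (h : Matched L eA eB D R) : Matched L eB eA D R :=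
  fun φ => (h φ).mono fun _ => Iff.symm

theorem Matched.mono {D' : Filter I} {R' : Set V} (h : Matched L eA eB D R) (hD : D' ≤ D)
    (hR : R' ⊆ R) : Matched L eA eB D' R' := fun φ =>
  ((h (φ.relabel (Set.inclusion hR))).filter_mono hD).mono fun i hi => by
    simpa only [Formula.realize_relabel, Function.comp_def, coe_inclusion] using hi

theorem Matched.of_finset (h : ∀ t : Finset V, (t : Set V) ⊆ R → Matched L eA eB D t) :
    Matched L eA eB D R := by
  classical
  intro φ
  let t : Finset V := φ.freeVarFinset.image Subtype.val
  have ht : (t : Set V) ⊆ R := by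
    intro r hr
    obtain ⟨q, -, rfl⟩ := Finset.mem_image.1 hr
    exact q.2
  let e : φ.freeVarFinset → (t : Set V) := fun r => ⟨r.1.1, Finset.mem_image_of_mem _ r.2⟩
  refine (h t ht (φ.restrictFreeVar e)).mono fun i hi => ?_
  simp only [Formula.Realize] at hi ⊢
  rwa [BoundedFormula.realize_restrictFreeVar (fun r : R => eA r i) fun _ => rfl,
    BoundedFormula.realize_restrictFreeVar (fun r : R => eB r i) fun _ => rfl] at hi

theorem Matched.exists_witness [Nonempty B] (h : Matched L eA eB D R) (a : I → A)
    (Φ : Finset (L.Formula (R ⊕ Unit))) :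
    ∃ g : I → B, ∀ᶠ i in D, ∀ φ ∈ Φ, φ.Realize (Sum.elim (fun r : R => eA r i) fun _ => a i) ↔
      φ.Realize (Sum.elim (fun r : R => eB r i) fun _ => g i) := by
  classical
  let χ : (Φ → Bool) → L.Formula R := fun T =>
    (Formula.iInf fun φ : Φ => if T φ then φ.1 else ∼φ.1).iExs Unit
  have hχ : ∀ᶠ i in D, ∀ T, (χ T).Realize (fun r => eA r i) ↔ (χ T).Realize (fun r => eB r i) :=
    Filter.eventually_all.2 fun T => h (χ T)
  have key : ∀ᶠ i in D, ∃ b : B, ∀ φ ∈ Φ,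
      φ.Realize (Sum.elim (fun r : R => eA r i) fun _ => a i) ↔
        φ.Realize (Sum.elim (fun r : R => eB r i) fun _ => b) := by
    refine hχ.mono fun i hi => ?_
    let T : Φ → Bool := fun φ =>
      decide (φ.1.Realize (Sum.elim (fun r : R => eA r i) fun _ => a i))
    have hA : (χ T).Realize (fun r => eA r i) := by
      refine Formula.realize_iExs.2 ⟨fun _ => a i, Formula.realize_iInf.2 fun φ => ?_⟩
      by_cases hφ : φ.1.Realize (Sum.elim (fun r : R => eA r i) fun _ => a i)
      · simp only [T, hφ, decide_true, if_true]
      · simpa only [T, hφ, decide_false, Bool.false_eq_true, if_false, Formula.realize_not] using hφ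
    obtain ⟨b, hb⟩ := Formula.realize_iExs.1 ((hi T).1 hA)
    refine ⟨b (), fun φ hφ => ?_⟩
    have hbφ := Formula.realize_iInf.1 hb ⟨φ, hφ⟩
    by_cases hr : φ.Realize (Sum.elim (fun r : R => eA r i) fun _ => a i)
    · simp only [T, hr, decide_true, if_true] at hbφ
      exact iff_of_true hr hbφ
    · simp only [T, hr, decide_false, Bool.false_eq_true, if_false, Formula.realize_not] at hbφ
      exact iff_of_false hr hbφ
  refine ⟨fun i => Classical.epsilon fun b => ∀ φ ∈ Φ,
      φ.Realize (Sum.elim (fun r : R => eA r i) fun _ => a i) ↔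
        φ.Realize (Sum.elim (fun r : R => eB r i) fun _ => b), key.mono fun i hi => ?_⟩
  exact Classical.epsilon_spec hi

/-- The single step of the construction: any function into `A` can be matched with some function
into `B`. -/
theorem Matched.exists_insert {K Ξ : Type (max u v w)} [Infinite K] {f : Ξ → I → K}
    {E : Set (Set I)} {C : Set Ξ} (h : Matched L eA eB (Filter.generate E) R)
    (hcons : Consistent f (Filter.generate E) C) {π : K → B} (hπ : Function.Surjective π)
    (hpair : ∀ a b, ∃ p, eA p = a ∧ eB p = b) {τ : Cardinal.{max u v w}} (hK : #K ≤ τ)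
    (hL : Cardinal.lift.{max u v w} L.card ≤ τ) (hE : #E ≤ τ) (hC : #C ≤ τ) (hR : #R ≤ τ)
    (hτ : τ < #Ξ) (a : I → A) :
    ∃ (E' : Set (Set I)) (C' : Set Ξ) (p : V), eA p = a ∧ E ⊆ E' ∧ C ⊆ C' ∧
      Consistent f (Filter.generate E') C' ∧ Matched L eA eB (Filter.generate E') (insert p R) ∧
      #E' ≤ τ ∧ #C' ≤ τ := by
  classical
  have : Nonempty B := ⟨π (Classical.arbitrary K)⟩
  have hτ₀ : ℵ₀ ≤ τ := (aleph0_le_mk K).trans hK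
  have hform : #(L.Formula (R ⊕ Unit)) ≤ τ := by
    have h1 : #(L.Formula (R ⊕ Unit)) ≤ #(Σ n, L.BoundedFormula (R ⊕ Unit) n) :=
      mk_le_of_injective (f := Sigma.mk 0) sigma_mk_injective
    refine h1.trans (BoundedFormula.card_le.trans (max_le hτ₀ (add_le_of_le hτ₀ ?_ ?_)))
    · rw [lift_id'.{max u v, max u v w}, mk_sum]
      simpa using add_le_of_le hτ₀ hR (one_le_aleph0.trans hτ₀)
    · exact hL
  have hfin : #(Finset (L.Formula (R ⊕ Unit))) ≤ τ := by
    rcases finite_or_infinite (L.Formula (R ⊕ Unit)) with hf | hf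
    · exact (mk_le_aleph0 (α := Finset (L.Formula (R ⊕ Unit)))).trans hτ₀
    · rwa [mk_finset_of_infinite]
  choose g hg using h.exists_witness a
  choose lft hlft using hπ
  obtain ⟨C₁, hCC₁, hC₁τ, hC₁⟩ := hcons.exists_exception (fun Φ i => lft (g Φ i)) hK hE hfin hC
  obtain ⟨ξ, hξ⟩ : ∃ ξ, ξ ∉ C₁ := by
    by_contra! hall
    rw [eq_univ_of_forall hall, mk_univ] at hC₁τ
    exact hτ.not_ge hC₁τ
  obtain ⟨p, hpa, hpb⟩ := hpair a fun i => π (f ξ i)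
  let Y : L.Formula (R ⊕ Unit) → Set I := fun φ =>
    {i | φ.Realize (Sum.elim (fun r : R => eA r i) fun _ => a i) ↔
      φ.Realize (Sum.elim (fun r : R => eB r i) fun _ => π (f ξ i))}
  refine ⟨E ∪ range Y, insert ξ C₁, p, hpa, subset_union_left, hCC₁.trans (subset_insert _ _),
    ?_, ?_, ?_, ?_⟩
  · intro X hX s hs hdisj η
    rw [disjoint_insert_right] at hdisj
    obtain ⟨t, ht, htfin, htX⟩ := Filter.mem_generate_iff.1 hX
    have hX₀ : ⋂₀ (t ∩ E) ∈ Filter.generate E :=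
      Filter.mem_generate_iff.2 ⟨_, inter_subset_right, htfin.inter_of_left _, subset_rfl⟩
    have hY : ∀ y ∈ t \ E, ∃ φ, Y φ = y := fun y hy => (ht hy.1).resolve_left hy.2
    have : Nonempty (L.Formula (R ⊕ Unit)) := ⟨⊥⟩
    choose! ψ hψ using hY
    let Φ : Finset (L.Formula (R ⊕ Unit)) := (htfin.sdiff (t := E)).toFinset.image ψ
    obtain ⟨i, ⟨⟨hiX, hiΦ⟩, hi⟩, hiξ⟩ :=
      hC₁ ξ hξ _ (Filter.inter_mem hX₀ (hg Φ)) s η hs hdisj.1 hdisj.2 Φ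
    refine ⟨i, htX fun y hy => ?_, hi⟩
    by_cases hyE : y ∈ E
    · exact hiX y ⟨hy, hyE⟩
    · rw [← hψ y ⟨hy, hyE⟩]
      have hiξ' : f ξ i = lft (g Φ i) := hiξ
      have := hiΦ (ψ y) (Finset.mem_image_of_mem ψ (by simp [hy, hyE]))
      change _ ↔ _
      rwa [hiξ', hlft]
  · intro φ
    let e : ↥(insert p R : Set V) → R ⊕ Unit := fun r =>
      if hr : r.1 ∈ R then Sum.inl ⟨r.1, hr⟩ else Sum.inr ()
    have heA : ∀ i, (Sum.elim (fun r : R => eA r i) fun _ => a i) ∘ e = fun r => eA r.1 i := by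
      intro i
      ext ⟨r, hr⟩
      by_cases hrR : r ∈ R
      · simp [e, hrR]
      · obtain rfl : r = p := hr.resolve_right hrR
        simp [e, hrR, hpa]
    have heB : ∀ i, (Sum.elim (fun r : R => eB r i) fun _ => π (f ξ i)) ∘ e =
        fun r => eB r.1 i := by
      intro i
      ext ⟨r, hr⟩
      by_cases hrR : r ∈ R
      · simp [e, hrR]
      · obtain rfl : r = p := hr.resolve_right hrR
        simp [e, hrR, hpb]
    have hmem : Y (φ.relabel e) ∈ Filter.generate (E ∪ range Y) :=
      Filter.mem_generate_of_mem (Or.inr ⟨_, rfl⟩)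
    refine Filter.mem_of_superset hmem fun i hi => ?_
    have hi' := (Formula.realize_relabel.symm.trans hi).trans Formula.realize_relabel
    rwa [heA, heB] at hi'
  · exact (mk_union_le _ _).trans (add_le_of_le hτ₀ hE (mk_range_le.trans hform))
  · exact mk_insert_le.trans (add_le_of_le hτ₀ hC₁τ (one_le_aleph0.trans hτ₀))

end Matched

section Ultrapower

open FirstOrder.Language

variable {L : FirstOrder.Language.{u, v}} {A B : Type w} [L.Structure A] [L.Structure B]

/-- The element of the ultrapower represented by a function. -/
def toUltrapower {I : Type x} (U : Ultrafilter I) (a : I → A) : (U : Filter I).Product fun _ => A :=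
  a

theorem toUltrapower_surjective {I : Type x} (U : Ultrafilter I) :
    Function.Surjective (toUltrapower (A := A) U) :=
  Quotient.mk_surjective

theorem toUltrapower_eq_iff {I : Type x} {U : Ultrafilter I} {a b : I → A} :
    toUltrapower U a = toUltrapower U b ↔ ∀ᶠ i in (U : Filter I), a i = b i :=
  Quotient.eq''

theorem funMap_toUltrapower {I : Type x} {U : Ultrafilter I} {n : ℕ} (g : L.Functions n)
    (a : Fin n → I → A) :
    (Structure.funMap g fun k => toUltrapower U (a k)) =
      toUltrapower U fun i => Structure.funMap g fun k => a k i :=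
  Ultraproduct.funMap_cast g a

theorem relMap_toUltrapower {I : Type x} {U : Ultrafilter I} {n : ℕ} (r : L.Relations n)
    (a : Fin n → I → A) :
    (Structure.RelMap r fun k => toUltrapower U (a k)) ↔
      ∀ᶠ i in (U : Filter I), Structure.RelMap r fun k => a k i :=
  relMap_quotient_mk' ((U : Filter I).productSetoid fun _ => A) r a

/-- A total matching between functions into `A` and functions into `B` induces an isomorphism of
ultrapowers. -/
theorem Matched.exists_equiv {I V : Type (max u v w)} {eA : V → I → A} {eB : V → I → B}
    {U : Ultrafilter I} {R : Set V} (h : Matched L eA eB (U : Filter I) R)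
    (hA : ∀ a, ∃ p ∈ R, eA p = a) (hB : ∀ b, ∃ p ∈ R, eB p = b) :
    ∃ j : ((U : Filter I).Product fun _ => A) ≃[L] ((U : Filter I).Product fun _ => B),
      ∀ p ∈ R, j (toUltrapower U (eA p)) = toUltrapower U (eB p) := by
  have key : ∀ p ∈ R, ∀ q ∈ R, toUltrapower U (eA p) = toUltrapower U (eA q) ↔
      toUltrapower U (eB p) = toUltrapower U (eB q) := by
    intro p hp q hq
    have := h (Term.equal (Term.var ⟨p, hp⟩) (Term.var ⟨q, hq⟩))
    simp only [Formula.realize_equal, Term.realize_var] at this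
    rw [toUltrapower_eq_iff, toUltrapower_eq_iff]
    exact Filter.eventually_congr this
  have rep : ∀ x : (U : Filter I).Product fun _ => A, ∃ p ∈ R, toUltrapower U (eA p) = x := by
    intro x
    obtain ⟨a, rfl⟩ := toUltrapower_surjective U x
    obtain ⟨p, hp, rfl⟩ := hA a
    exact ⟨p, hp, rfl⟩
  choose c hcR hc using rep
  let F : ((U : Filter I).Product fun _ => A) → ((U : Filter I).Product fun _ => B) :=
    fun x => toUltrapower U (eB (c x))
  have hF : ∀ p ∈ R, F (toUltrapower U (eA p)) = toUltrapower U (eB p) := fun p hp =>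
    (key _ (hcR _) p hp).1 (hc _)
  have hFbij : Function.Bijective F := by
    refine ⟨fun x y hxy => ?_, fun y => ?_⟩
    · rw [← hc x, ← hc y]
      exact (key _ (hcR x) _ (hcR y)).2 hxy
    · obtain ⟨b, rfl⟩ := toUltrapower_surjective U y
      obtain ⟨p, hp, rfl⟩ := hB b
      exact ⟨_, hF p hp⟩
  refine ⟨⟨Equiv.ofBijective F hFbij, ?_, ?_⟩, hF⟩
  · intro n g x
    obtain ⟨y, rfl⟩ : ∃ y : Fin n → R, x = fun k => toUltrapower U (eA (y k)) :=
      ⟨fun k => ⟨c (x k), hcR _⟩, funext fun k => (hc (x k)).symm⟩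
    obtain ⟨q, hq, hqg⟩ := hA fun i => Structure.funMap g fun k => eA (y k) i
    have hFy : (F ∘ fun k => toUltrapower U (eA (y k))) = fun k => toUltrapower U (eB (y k)) :=
      funext fun k => hF _ (y k).2
    change F (Structure.funMap g fun k => toUltrapower U (eA (y k))) = Structure.funMap g (F ∘ _)
    rw [hFy, funMap_toUltrapower, funMap_toUltrapower, ← hqg, hF q hq, toUltrapower_eq_iff]
    refine (h (Term.equal (Term.var ⟨q, hq⟩) (Term.func g fun k => Term.var (y k)))).mono
      fun i hi => ?_
    simp only [Formula.realize_equal, Term.realize_var, Term.realize_func] at hi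
    exact hi.1 (congrFun hqg i)
  · intro n r x
    obtain ⟨y, rfl⟩ : ∃ y : Fin n → R, x = fun k => toUltrapower U (eA (y k)) :=
      ⟨fun k => ⟨c (x k), hcR _⟩, funext fun k => (hc (x k)).symm⟩
    have hFy : (F ∘ fun k => toUltrapower U (eA (y k))) = fun k => toUltrapower U (eB (y k)) :=
      funext fun k => hF _ (y k).2
    change Structure.RelMap r (F ∘ _) ↔ _
    rw [hFy, relMap_toUltrapower, relMap_toUltrapower]
    have := h (r.formula fun k => Term.var (y k))
    simp only [Formula.realize_rel, Term.realize_var] at this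
    exact (Filter.eventually_congr this).symm

theorem mk_pi_index_le (K : Type x) [Infinite K] :
    #(((K → Set K) × (K → Set K) × (K → K)) → K) ≤ #(Set (Set K)) := by
  have hK : ℵ₀ ≤ #K := aleph0_le_mk K
  have h2 : ℵ₀ ≤ (2 : Cardinal.{x}) ^ #K := hK.trans (cantor _).le
  have hI : #((K → Set K) × (K → Set K) × (K → K)) = 2 ^ #K := by
    simp [mk_set, ← power_mul, mul_eq_self hK, power_self_eq hK, mul_eq_self h2]
  rw [← power_def, hI, mk_set, mk_set, ← power_self_eq h2]
  exact power_le_power_right (cantor _).le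

/-- The set of elements of a sum of three types with prescribed parts. -/
def sumSet {X Y Z : Type x} (E : Set X) (C : Set Y) (R : Set Z) : Set (X ⊕ Y ⊕ Z) :=
  {t | Sum.elim (· ∈ E) (Sum.elim (· ∈ C) (· ∈ R)) t}

theorem mk_sumSet_le {X Y Z : Type x} {E : Set X} {C : Set Y} {R : Set Z} {τ : Cardinal.{x}}
    (hτ : ℵ₀ ≤ τ) (hE : #E ≤ τ) (hC : #C ≤ τ) (hR : #R ≤ τ) : #(sumSet E C R) ≤ τ := by
  have : sumSet E C R ⊆ Sum.inl '' E ∪ ((Sum.inr ∘ Sum.inl) '' C ∪ (Sum.inr ∘ Sum.inr) '' R) := by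
    rintro (t | t | t) ht
    · exact Or.inl ⟨t, ht, rfl⟩
    · exact Or.inr (Or.inl ⟨t, ht, rfl⟩)
    · exact Or.inr (Or.inr ⟨t, ht, rfl⟩)
  refine (mk_le_mk_of_subset this).trans ((mk_union_le _ _).trans (add_le_of_le hτ
    (mk_image_le.trans hE) ((mk_union_le _ _).trans (add_le_of_le hτ (mk_image_le.trans hC)
      (mk_image_le.trans hR)))))

/-- An elementary embedding becomes an isomorphism over the base after passing to a suitable
ultrapower. -/
theorem exists_ultrapower_equiv [Nonempty A] (e : A ↪ₑ[L] B) :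
    ∃ (I : Type (max u v w)) (U : Ultrafilter I)
      (j : ((U : Filter I).Product fun _ => A) ≃[L] ((U : Filter I).Product fun _ => B)),
      ∀ a : A, j (↑(fun _ : I => a) : (U : Filter I).Product fun _ => A) =
        (↑(fun _ : I => e a) : (U : Filter I).Product fun _ => B) := by
  classical
  let K : Type (max u v w) := B ⊕ L.Symbols ⊕ ℕ
  have : Infinite K := inferInstanceAs (Infinite (B ⊕ L.Symbols ⊕ ℕ))
  have hK₀ : ℵ₀ ≤ #K := aleph0_le_mk K
  have b₀ : B := e (Classical.arbitrary A)
  have : Nonempty B := ⟨b₀⟩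
  let πB : K → B := Sum.elim id fun _ => b₀
  have hπB : Function.Surjective πB := fun b => ⟨Sum.inl b, rfl⟩
  let πA : K → A := Function.invFun e ∘ πB
  have hπA : Function.Surjective πA := (Function.invFun_surjective e.injective).comp hπB
  have hLK : Cardinal.lift.{max u v w} L.card ≤ #K :=
    mk_le_of_injective (f := fun q : ULift L.Symbols => (Sum.inr (Sum.inl q.down) : K)) (by
      rintro ⟨a⟩ ⟨b⟩ h
      exact congrArg ULift.up (Sum.inl_injective (Sum.inr_injective h)))
  let I : Type (max u v w) := (K → Set K) × (K → Set K) × (K → K)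
  let Ξ : Type (max u v w) := Set (Set K)
  let f : Ξ → I → K := readOff K
  let V : Type (max u v w) := (I → A) × (I → B)
  let Efun : Set (Set I ⊕ Ξ ⊕ V) → Set (Set I) := fun s => Sum.inl ⁻¹' s
  let Cfun : Set (Set I ⊕ Ξ ⊕ V) → Set Ξ := fun s => (Sum.inr ∘ Sum.inl) ⁻¹' s
  let Rfun : Set (Set I ⊕ Ξ ⊕ V) → Set V := fun s => (Sum.inr ∘ Sum.inr) ⁻¹' s
  have hE : ∀ s, #(Efun s) ≤ #s := fun s => mk_preimage_of_injective _ _ Sum.inl_injective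
  have hC : ∀ s, #(Cfun s) ≤ #s := fun s =>
    mk_preimage_of_injective _ _ (Sum.inr_injective.comp Sum.inl_injective)
  have hR : ∀ s, #(Rfun s) ≤ #s := fun s =>
    mk_preimage_of_injective _ _ (Sum.inr_injective.comp Sum.inr_injective)
  let Good : Set (Set I ⊕ Ξ ⊕ V) → Prop := fun s =>
    Consistent f (Filter.generate (Efun s)) (Cfun s) ∧
      Matched L (Prod.fst : V → I → A) Prod.snd (Filter.generate (Efun s)) (Rfun s)
  let task : (I → A) ⊕ (I → B) → Set (Set I ⊕ Ξ ⊕ V) → Prop := fun j s =>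
    Sum.elim (fun a => ∃ p ∈ Rfun s, p.1 = a) (fun b => ∃ p ∈ Rfun s, p.2 = b) j
  let R₀ : Set V := range fun a : A => ((fun _ => a, fun _ => e a) : V)
  suffices H : ∃ s, sumSet ∅ ∅ R₀ ⊆ s ∧ Good s ∧ ∀ j, task j s by
    obtain ⟨s, hs₀, ⟨hcons, hmatch⟩, htask⟩ := H
    have : (Filter.generate (Efun s)).NeBot := by
      refine Filter.forall_mem_nonempty_iff_neBot.1 fun X hX => ?_
      exact (hcons X hX ∅ (by simp) (empty_disjoint _) fun _ => Classical.arbitrary K).mono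
        inter_subset_left
    obtain ⟨j, hj⟩ := (hmatch.mono (Ultrafilter.of_le _) subset_rfl).exists_equiv
      (fun a => htask (Sum.inl a)) (fun b => htask (Sum.inr b))
    exact ⟨I, _, j, fun a => hj (fun _ => a, fun _ => e a) (hs₀ ⟨a, rfl⟩)⟩
  refine exists_superset_forall_task Good task (lam := #K) (Θ := #Ξ) ?_ hK₀ ?_ ?_ ?_ ?_ _ ?_ ?_
  · rintro (a | b) s t hst ⟨p, hp, h⟩
    exacts [⟨p, hst hp, h⟩, ⟨p, hst hp, h⟩]
  · simp only [Ξ, mk_set]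
    exact (cantor _).trans (cantor _)
  · have h1 : #(I → A) ≤ #Ξ := (mk_le_of_surjective hπA.comp_left).trans (mk_pi_index_le K)
    have h2 : #(I → B) ≤ #Ξ := (mk_le_of_surjective hπB.comp_left).trans (mk_pi_index_le K)
    have hΞ : ℵ₀ ≤ #Ξ := aleph0_le_mk (Set (Set K))
    rw [mk_sum, lift_id, lift_id]
    exact add_le_of_le hΞ h1 h2
  · intro c hne hchain hc
    have hmono : ∀ s ∈ c, Filter.generate (Efun (⋃₀ c)) ≤ Filter.generate (Efun s) := fun s hs =>
      Filter.le_generate_iff.2 fun _ hX =>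
        Filter.mem_generate_of_mem (preimage_mono (subset_sUnion_of_mem hs) hX)
    refine ⟨?_, Matched.of_finset fun t ht => ?_⟩
    · intro X hX s hs hdisj h
      obtain ⟨t, ht, htfin, htX⟩ := Filter.mem_generate_iff.1 hX
      obtain ⟨s', hs', hts'⟩ :=
        hchain.directedOn.exists_mem_subset_of_finite_of_subset_sUnion hne
          (htfin.image Sum.inl) (image_subset_iff.2 ht)
      refine (hc s' hs').1 X (Filter.mem_generate_iff.2 ⟨t, image_subset_iff.1 hts', htfin, htX⟩)
        s hs (hdisj.mono_right (preimage_mono (subset_sUnion_of_mem hs'))) h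
    · obtain ⟨s', hs', hts'⟩ :=
        hchain.directedOn.exists_mem_subset_of_finite_of_subset_sUnion hne
          (t.finite_toSet.image (Sum.inr ∘ Sum.inr))
          (image_subset_iff.2 ht)
      exact (hc s' hs').2.mono (hmono s' hs') (image_subset_iff.1 hts')
  · rintro s ⟨hcons, hmatch⟩ hsΘ j
    have hτ : max #K #s < #Ξ := max_lt (by
      simp only [Ξ, mk_set]
      exact (cantor _).trans (cantor _)) hsΘ
    have hs : #s ≤ max #K #s := le_max_right _ _
    have hKτ : #K ≤ max #K #s := le_max_left _ _
    have hτ₀ := hK₀.trans hKτ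
    suffices H : ∃ (E' : Set (Set I)) (C' : Set Ξ) (p : V), Efun s ⊆ E' ∧ Cfun s ⊆ C' ∧
        Sum.elim (fun a => p.1 = a) (fun b => p.2 = b) j ∧ Consistent f (Filter.generate E') C' ∧
        Matched L (Prod.fst : V → I → A) Prod.snd (Filter.generate E') (insert p (Rfun s)) ∧
        #E' ≤ max #K #s ∧ #C' ≤ max #K #s by
      obtain ⟨E', C', p, hEE', hCC', hpj, hcons', hmatch', hE', hC'⟩ := H
      refine ⟨sumSet E' C' (insert p (Rfun s)), ?_, ⟨hcons', hmatch'⟩, ?_, mk_sumSet_le hτ₀ hE' hC'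
        (mk_insert_le.trans (add_le_of_le hτ₀ ((hR s).trans hs) (one_le_aleph0.trans hτ₀)))⟩
      · rintro (t | t | t) ht
        exacts [hEE' ht, hCC' ht, Or.inr ht]
      · rcases j with a | b
        exacts [⟨p, Or.inl rfl, hpj⟩, ⟨p, Or.inl rfl, hpj⟩]
    rcases j with a | b
    · obtain ⟨E', C', p, hp, hEE', hCC', hcons', hmatch', hcard⟩ := hmatch.exists_insert hcons hπB
        (fun a b => ⟨(a, b), rfl, rfl⟩) hKτ (hLK.trans hKτ) ((hE s).trans hs) ((hC s).trans hs)
        ((hR s).trans hs) hτ a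
      exact ⟨E', C', p, hEE', hCC', hp, hcons', hmatch', hcard⟩
    · obtain ⟨E', C', p, hp, hEE', hCC', hcons', hmatch', hcard⟩ :=
        hmatch.symm.exists_insert hcons hπA
        (fun b a => ⟨(a, b), rfl, rfl⟩) hKτ (hLK.trans hKτ) ((hE s).trans hs) ((hC s).trans hs)
        ((hR s).trans hs) hτ b
      exact ⟨E', C', p, hEE', hCC', hp, hcons', hmatch'.symm, hcard⟩
  · refine ⟨consistent_readOff K, fun φ => Filter.Eventually.of_forall fun i => ?_⟩
    have : (fun r : Rfun (sumSet ∅ ∅ R₀) => r.1.2 i) = e ∘ fun r => r.1.1 i := by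
      ext ⟨r, a, rfl⟩
      rfl
    rw [this]
    exact (e.map_formula φ _).symm
  · refine mk_sumSet_le hK₀ (by simp) (by simp) ?_
    let q : A → K := fun a => Sum.inl (e a)
    have hq : Function.Injective q := Sum.inl_injective.comp e.injective
    refine mk_le_of_injective (f := fun r : R₀ => q (r.1.1 (fun _ => ∅, fun _ => ∅, id))) ?_
    rintro ⟨_, a, rfl⟩ ⟨_, b, rfl⟩ hab
    obtain rfl : a = b := hq hab
    rfl

end Ultrapower

end KeislerShelah

theorem stmt_15 {L : FirstOrder.Language.{u, v}} {M : Type w} [L.Structure M]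
    (S : L.Substructure M) :
    S.IsElementary ↔
      ∃ (I : Type (max u v w)) (U : Ultrafilter I)
        (j : ((U : Filter I).Product fun _ : I => ↥S) ≃[L]
             ((U : Filter I).Product fun _ : I => M)),
        ∀ a : ↥S,
          j (↑(fun _ : I => a) : (U : Filter I).Product fun _ : I => ↥S) =
            (↑(fun _ : I => (a : M)) : (U : Filter I).Product fun _ : I => M) := by
  constructor
  · intro hS
    let e : S ↪ₑ[L] M := (⟨S, hS⟩ : L.ElementarySubstructure M).subtype
    rcases isEmpty_or_nonempty S with hS' | hS'
    · have hM : IsEmpty M := by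
        by_contra hne
        rw [not_isEmpty_iff] at hne
        have h1 : M ⊨ (FirstOrder.Language.Sentence.cardGe L 1) := by
          rw [FirstOrder.Language.Sentence.realize_cardGe]
          exact_mod_cast Cardinal.one_le_iff_ne_zero.2 (Cardinal.mk_ne_zero M)
        rw [← e.map_sentence, FirstOrder.Language.Sentence.realize_cardGe] at h1
        simp at h1
      have hm : KeislerShelah.Matched L (fun (p : PEmpty) (_ : PUnit) => (p.elim : S))
          (fun p _ => (p.elim : M)) ((pure PUnit.unit : Ultrafilter PUnit) : Filter PUnit)
          Set.univ := fun φ => Filter.Eventually.of_forall fun i => by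
        rw [← e.map_formula]
        refine iff_of_eq (congrArg _ (funext fun p => p.1.elim))
      obtain ⟨j, -⟩ := hm.exists_equiv (fun a => isEmptyElim (a PUnit.unit))
        (fun b => isEmptyElim (b PUnit.unit))
      exact ⟨_, _, j, fun a => isEmptyElim a⟩
    · exact KeislerShelah.exists_ultrapower_equiv e
  · rintro ⟨I, U, j, hj⟩ n φ x
    have hI : Nonempty I := (U : Filter I).nonempty_of_neBot
    rcases isEmpty_or_nonempty M with hM | ⟨⟨m⟩⟩
    · have : S = ⊤ := SetLike.ext fun m => isEmptyElim m
      subst this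
      exact (⊤ : L.ElementarySubstructure M).isElementary φ x
    have : Nonempty M := ⟨m⟩
    have : Nonempty S := by
      obtain ⟨s, -⟩ := KeislerShelah.toUltrapower_surjective U
        (j.symm (KeislerShelah.toUltrapower U fun _ => m))
      exact ⟨s hI.some⟩
    have h1 := FirstOrder.Language.Ultraproduct.realize_formula_cast (u := U) φ
      fun k (_ : I) => (x k : M)
    have h2 := FirstOrder.Language.Ultraproduct.realize_formula_cast (u := U) φ
      fun k (_ : I) => x k
    rw [Filter.eventually_const] at h1 h2
    refine h1.symm.trans (Iff.trans ?_ h2)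
    refine Iff.trans (iff_of_eq (congrArg _ (funext fun k => (hj (x k)).symm)))
      (FirstOrder.Language.StrongHomClass.realize_formula j φ)
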